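/- Dependence of the S-shaped function on the steepness parameter β (conservativeness of the scores): for all real β₁, β₂ with 0 < β₁ < β₂, (i) if 0 < ξ < 1/2 then f_{β₂}(ξ) < f_{β₁}(ξ), and (ii) if 1/2 < ξ < 1 then f_{β₁}(ξ) < f_{β₂}(ξ); that is, decreasing β pulls the score towards 1/2, downweighting scores less sharply as the argument moves away from 1. -/

import Mathlib

/-- The S-shaped scoring function: `0` for `ξ ≤ 0`, `ξ^β/(ξ^β + (1-ξ)^β)` for
`0 < ξ < 1`, and `1` for `ξ ≥ 1`; real powers are `Real.rpow`. -/
noncomputable def sShape (β : ℝ) (ξ : ℝ) : ℝ :=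
  if ξ ≤ 0 then 0 else if ξ < 1 then ξ ^ β / (ξ ^ β + (1 - ξ) ^ β) else 1

/-! On `(0, 1)` the S-shaped function is the logistic sigmoid of `β` times the log-odds
`log (ξ / (1 - ξ))`. The sigmoid is strictly increasing, so the direction of the dependence on `β`
is the sign of the log-odds, which changes at `ξ = 1 / 2`. -/

section PowerShare

variable {a b : ℝ}

theorem rpow_div_rpow_add_rpow_eq_sigmoid (ha : 0 < a) (hb : 0 < b) (β : ℝ) :
    a ^ β / (a ^ β + b ^ β) = Real.sigmoid (β * Real.log (a / b)) := by
  have exp_neg_log_odds : Real.exp (-(β * Real.log (a / b))) = b ^ β / a ^ β := by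
    rw [← mul_neg, ← Real.log_inv, inv_div, mul_comm, ← Real.rpow_def_of_pos (div_pos hb ha),
      Real.div_rpow hb.le ha.le]
  rw [Real.sigmoid_def, exp_neg_log_odds, one_add_div (Real.rpow_pos_of_pos ha β).ne', inv_div]

theorem strictMono_rpow_div_rpow_add_rpow (hb : 0 < b) (hba : b < a) :
    StrictMono fun β : ℝ => a ^ β / (a ^ β + b ^ β) := by
  simp only [rpow_div_rpow_add_rpow_eq_sigmoid (hb.trans hba) hb]
  have log_odds_pos : 0 < Real.log (a / b) := Real.log_pos ((one_lt_div hb).2 hba)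
  exact Real.sigmoid_strictMono.comp (strictMono_mul_right_of_pos log_odds_pos)

theorem strictAnti_rpow_div_rpow_add_rpow (ha : 0 < a) (hab : a < b) :
    StrictAnti fun β : ℝ => a ^ β / (a ^ β + b ^ β) := by
  have hb : 0 < b := ha.trans hab
  simp only [rpow_div_rpow_add_rpow_eq_sigmoid ha hb]
  have log_odds_neg : Real.log (a / b) < 0 := Real.log_neg (div_pos ha hb) ((div_lt_one hb).2 hab)
  exact Real.sigmoid_strictMono.comp_strictAnti (strictAnti_mul_right log_odds_neg)

end PowerShare

theorem sShape_of_pos_of_lt_one {ξ : ℝ} (hξ₀ : 0 < ξ) (hξ₁ : ξ < 1) (β : ℝ) :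
    sShape β ξ = ξ ^ β / (ξ ^ β + (1 - ξ) ^ β) := by
  rw [sShape, if_neg hξ₀.not_ge, if_pos hξ₁]

theorem sShape_beta_dependence_general (ξ : ℝ) :
    (0 < ξ → ξ < 1 / 2 → StrictAnti fun β => sShape β ξ) ∧
    (1 / 2 < ξ → ξ < 1 → StrictMono fun β => sShape β ξ) := by
  constructor
  · intro hξ₀ hξ_half
    simp only [sShape_of_pos_of_lt_one hξ₀ (by linarith)]
    exact strictAnti_rpow_div_rpow_add_rpow hξ₀ (by linarith)
  · intro hξ_half hξ₁
    simp only [sShape_of_pos_of_lt_one (by linarith) hξ₁]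
    exact strictMono_rpow_div_rpow_add_rpow (sub_pos.2 hξ₁) (by linarith)

/-- Dependence of the S-shaped function on the steepness parameter `β`: for
`0 < β₁ < β₂`, (i) if `0 < ξ < 1/2` then `sShape β₂ ξ < sShape β₁ ξ`, and
(ii) if `1/2 < ξ < 1` then `sShape β₁ ξ < sShape β₂ ξ`. -/
theorem sShape_beta_dependence (β₁ β₂ : ℝ) (hβ₁ : 0 < β₁) (hβ : β₁ < β₂) (ξ : ℝ) :
    (0 < ξ → ξ < 1 / 2 → sShape β₂ ξ < sShape β₁ ξ) ∧
    (1 / 2 < ξ → ξ < 1 → sShape β₁ ξ < sShape β₂ ξ) :=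
  ⟨fun hξ₀ hξ_half => (sShape_beta_dependence_general ξ).1 hξ₀ hξ_half hβ,
    fun hξ_half hξ₁ => (sShape_beta_dependence_general ξ).2 hξ_half hξ₁ hβ⟩
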